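/- Let N ≥ 3 and let D_N be the dihedral subgroup of the permutation group of Fin N generated by the N-cycle i ↦ i+1 (mod N) and the reflection i ↦ −i (mod N). Then the real dimension of D_N su(2^N), the real vector space of 2^N × 2^N complex matrices a that are skew-Hermitian, traceless, and satisfy U_α a U_α⁻¹ = a for all α ∈ D_N, equals (1/(2N)) · Σ_{d ∣ N} φ(d) · 4^{N/d} + 5·4^{(N−2)/2} − 1 if N is even, and (1/(2N)) · Σ_{d ∣ N} φ(d) · 4^{N/d} + 2·4^{(N−1)/2} − 1 if N is odd, where φ is Euler's totient function and the sums run over the positive divisors d of N. -/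

import Mathlib

open Matrix

/-- The permutation matrix on the index set `I → Fin 2` associated to a permutation `α` of
`I`, corresponding to the bijection `x ↦ x ∘ α`: its `(x, y)` entry is `1` if `y = x ∘ α`
and `0` otherwise. -/
def qubitPermMatrix {I : Type*} [DecidableEq I] [Fintype I] (α : Equiv.Perm I) :
    Matrix (I → Fin 2) (I → Fin 2) ℂ :=
  Matrix.of fun x y => if y = x ∘ α then 1 else 0

/-!
A skew-Hermitian matrix `a` is determined by the real matrix `re a + im a`, which is arbitrary and
has the same permutation symmetries. So the invariant skew-Hermitian matrices correspond to the
real functions on the orbits of pairs of basis states, and the trace condition cuts out a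
hyperplane. A pair of basis states is a word of length `N` in the four letters `Fin 2 × Fin 2`,
hence the dimension is one less than the number of bracelets with `N` beads in four colours.
Bracelets are counted by Burnside's lemma: a permutation with `k` cycles fixes `4 ^ k` words, the
rotation by `i` has `N / d` cycles where `d` is the additive order of `i`, and a reflection with
`t` fixed points has `(N + t) / 2` cycles.
-/

section SkewHermitian

open MulAction

variable {J : Type*}

/-- The real-linear map sending a real matrix `b` to the skew-Hermitian matrix with real part
`b - bᵀ` and imaginary part `b + bᵀ`; it is an isomorphism onto the skew-Hermitian matrices. -/
def realToSkew : Matrix J J ℝ →ₗ[ℝ] Matrix J J ℂ where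
  toFun b := .of fun x y => ⟨b x y - b y x, b x y + b y x⟩
  map_add' b c := by
    ext x y
    apply Complex.ext <;> simp <;> ring
  map_smul' r b := by
    ext x y
    apply Complex.ext <;> simp <;> ring

theorem realToSkew_apply (b : Matrix J J ℝ) (x y : J) :
    realToSkew b x y = ⟨b x y - b y x, b x y + b y x⟩ :=
  rfl

theorem re_add_im_realToSkew (b : Matrix J J ℝ) (x y : J) :
    (realToSkew b x y).re + (realToSkew b x y).im = 2 * b x y := by
  rw [realToSkew_apply]
  ring

theorem realToSkew_injective :
    Function.Injective (realToSkew : Matrix J J ℝ →ₗ[ℝ] Matrix J J ℂ) := by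
  intro b c h
  ext x y
  have hb := re_add_im_realToSkew b x y
  rw [h, re_add_im_realToSkew] at hb
  linarith

theorem conjTranspose_realToSkew (b : Matrix J J ℝ) : (realToSkew b)ᴴ = -realToSkew b := by
  ext x y
  apply Complex.ext <;> simp [realToSkew_apply, add_comm]

theorem realToSkew_re_add_im {a : Matrix J J ℂ} (ha : aᴴ = -a) :
    realToSkew (.of fun x y => ((a x y).re + (a x y).im) / 2) = a := by
  ext x y
  have hyx : star (a y x) = -a x y := congrFun₂ ha x y
  have hre : (a y x).re = -(a x y).re := congrArg Complex.re hyx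
  have him : -(a y x).im = -(a x y).im := congrArg Complex.im hyx
  apply Complex.ext <;> simp only [realToSkew_apply, of_apply] <;> linarith

theorem trace_realToSkew [Fintype J] (b : Matrix J J ℝ) :
    (realToSkew b).trace = ⟨0, 2 * b.trace⟩ := by
  apply Complex.ext <;> simp [Matrix.trace, realToSkew_apply, ← two_mul, Finset.mul_sum]

variable (G : Type*) [Group G] [MulAction G J]

/-- The linear map identifying the real functions on the `G`-orbits of `J × J` with the
`G`-invariant real matrices. -/
def orbitMatrix (J : Type*) [MulAction G J] :
    (orbitRel.Quotient G (J × J) → ℝ) →ₗ[ℝ] Matrix J J ℝ where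
  toFun f := .of fun x y => f (Quotient.mk _ (x, y))
  map_add' _ _ := rfl
  map_smul' _ _ := rfl

theorem orbitMatrix_apply (f : orbitRel.Quotient G (J × J) → ℝ) (x y : J) :
    orbitMatrix G J f x y = f (Quotient.mk _ (x, y)) :=
  rfl

theorem orbitMatrix_injective : Function.Injective (orbitMatrix G J) := by
  intro f g h
  ext o
  obtain ⟨⟨x, y⟩, rfl⟩ := Quotient.exists_rep o
  exact congrFun₂ h x y

theorem orbitMatrix_smul_smul (f : orbitRel.Quotient G (J × J) → ℝ) (g : G) (x y : J) :
    orbitMatrix G J f (g • x) (g • y) = orbitMatrix G J f x y :=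
  congrArg f (Quotient.sound (mem_orbit (x, y) g))

theorem exists_orbitMatrix_eq {b : Matrix J J ℝ}
    (hb : ∀ (g : G) x y, b (g • x) (g • y) = b x y) : ∃ f, orbitMatrix G J f = b := by
  refine ⟨Quotient.lift (fun p => b p.1 p.2) ?_, rfl⟩
  rintro _ p ⟨g, rfl⟩
  exact hb g p.1 p.2

theorem traceLinearMap_comp_orbitMatrix_ne_zero [Fintype J] [Nonempty J] :
    traceLinearMap J ℝ ℝ ∘ₗ orbitMatrix G J ≠ 0 := by
  intro h
  have h1 : (orbitMatrix G J 1).trace = 0 := LinearMap.congr_fun h 1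
  simp [Matrix.trace, orbitMatrix_apply] at h1

/-- The real vector space of traceless skew-Hermitian matrices indexed by a `G`-set that are
invariant under the diagonal action of `G` on the pairs of indices. -/
def invariantSu (J : Type*) [Fintype J] [MulAction G J] : Submodule ℝ (Matrix J J ℂ) where
  carrier := {a | aᴴ = -a ∧ a.trace = 0 ∧ ∀ (g : G) x y, a (g • x) (g • y) = a x y}
  zero_mem' := by simp
  add_mem' := by
    rintro a b ⟨ha, ha', ha''⟩ ⟨hb, hb', hb''⟩
    refine ⟨?_, ?_, fun g x y => ?_⟩
    · rw [conjTranspose_add, ha, hb, neg_add]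
    · rw [trace_add, ha', hb', add_zero]
    · rw [Matrix.add_apply, ha'', hb'', Matrix.add_apply]
  smul_mem' := by
    rintro r a ⟨ha, ha', ha''⟩
    refine ⟨?_, ?_, fun g x y => ?_⟩
    · rw [conjTranspose_smul, ha, star_trivial, smul_neg]
    · rw [trace_smul, ha', smul_zero]
    · rw [Matrix.smul_apply, ha'', Matrix.smul_apply]

theorem mem_invariantSu [Fintype J] {a : Matrix J J ℂ} :
    a ∈ invariantSu G J ↔
      aᴴ = -a ∧ a.trace = 0 ∧ ∀ (g : G) x y, a (g • x) (g • y) = a x y :=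
  Iff.rfl

theorem invariantSu_eq_map [Fintype J] :
    invariantSu G J = (LinearMap.ker (traceLinearMap J ℝ ℝ ∘ₗ orbitMatrix G J)).map
      (realToSkew ∘ₗ orbitMatrix G J) := by
  ext a
  constructor
  · rintro ⟨hskew, htrace, hinv⟩
    obtain ⟨f, hf⟩ := exists_orbitMatrix_eq G
      (b := .of fun x y => ((a x y).re + (a x y).im) / 2) fun g x y => by
        simp only [of_apply, hinv]
    have hfa : realToSkew (orbitMatrix G J f) = a := by rw [hf, realToSkew_re_add_im hskew]
    refine ⟨f, ?_, hfa⟩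
    rw [← hfa, trace_realToSkew] at htrace
    have him : 2 * (orbitMatrix G J f).trace = 0 := congrArg Complex.im htrace
    exact (mul_eq_zero_iff_left two_ne_zero).1 him
  · rintro ⟨f, hf, rfl⟩
    have htrace : (orbitMatrix G J f).trace = 0 := hf
    refine ⟨conjTranspose_realToSkew _, ?_, fun g x y => ?_⟩
    · rw [LinearMap.comp_apply, trace_realToSkew, htrace, mul_zero]
      rfl
    · simp only [LinearMap.comp_apply, realToSkew_apply, orbitMatrix_smul_smul]

theorem finrank_invariantSu_add_one [Fintype J] [Nonempty J] :
    Module.finrank ℝ (invariantSu G J) + 1 = Nat.card (orbitRel.Quotient G (J × J)) := by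
  have : Fintype (orbitRel.Quotient G (J × J)) :=
    @Fintype.ofFinite _ (Quotient.finite _)
  have hinj : Function.Injective (realToSkew ∘ₗ orbitMatrix G J) :=
    realToSkew_injective.comp (orbitMatrix_injective G)
  rw [invariantSu_eq_map, ← (Submodule.equivMapOfInjective _ hinj _).finrank_eq,
    Module.Dual.finrank_ker_add_one_of_ne_zero (traceLinearMap_comp_orbitMatrix_ne_zero G),
    Module.finrank_fintype_fun_eq_card, Nat.card_eq_fintype_card]

end SkewHermitian

section Qubits

open MulAction

variable {I : Type*}

theorem permMatrix_mul_mul_inv {J R : Type*} [Fintype J] [DecidableEq J] [CommRing R]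
    (σ : Equiv.Perm J) (a : Matrix J J R) :
    σ.permMatrix R * a * (σ.permMatrix R)⁻¹ = a.submatrix σ σ := by
  have hinv : (σ.permMatrix R)⁻¹ = σ⁻¹.permMatrix R := by
    apply inv_eq_right_inv
    rw [← permMatrix_mul, inv_mul_cancel, permMatrix_one]
  rw [hinv, PEquiv.toMatrix_toPEquiv_mul, PEquiv.mul_toMatrix_toPEquiv, submatrix_submatrix]
  rfl

theorem qubitPermMatrix_eq_permMatrix [Fintype I] [DecidableEq I] (α : Equiv.Perm I) :
    qubitPermMatrix α =
      Equiv.Perm.permMatrix ℂ (toPerm (DomMulAct.mk α) : Equiv.Perm (I → Fin 2)) := by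
  ext x y
  simp only [qubitPermMatrix, of_apply, PEquiv.toMatrix_apply, Equiv.toPEquiv_apply,
    Option.mem_some_iff, eq_comm (a := y)]
  rfl

variable (G : Type*) [Group G] [MulAction G I]

theorem mem_invariantSu_domMulAct [Fintype I] [DecidableEq I]
    {a : Matrix (I → Fin 2) (I → Fin 2) ℂ} :
    a ∈ invariantSu Gᵈᵐᵃ (I → Fin 2) ↔
      aᴴ = -a ∧ a.trace = 0 ∧ ∀ α ∈ (toPermHom G I).range,
        qubitPermMatrix α * a * (qubitPermMatrix α)⁻¹ = a := by
  simp only [mem_invariantSu, MonoidHom.mem_range, forall_exists_index, forall_apply_eq_imp_iff,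
    qubitPermMatrix_eq_permMatrix, permMatrix_mul_mul_inv, DomMulAct.mk.surjective.forall,
    ← Matrix.ext_iff]
  rfl

theorem card_orbits_arrow_prod (A B : Type*) :
    Nat.card (orbitRel.Quotient Gᵈᵐᵃ (I → A × B)) =
      Nat.card (orbitRel.Quotient Gᵈᵐᵃ ((I → A) × (I → B))) := by
  refine Nat.card_congr (Quotient.congr (Equiv.arrowProdEquivProdArrow I _ _) fun f f' => ?_)
  exact exists_congr fun g => (Equiv.arrowProdEquivProdArrow I _ _).apply_eq_iff_eq.symm

end Qubits

section Polya

open MulAction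

variable {G X : Type*} [Group G] [MulAction G X]

theorem mem_fixedBy_mk_iff_le_ker {C : Type*} {g : G} {f : X → C} :
    f ∈ fixedBy (X → C) (DomMulAct.mk g) ↔
      orbitRel (Subgroup.zpowers g) X ≤ Setoid.ker f := by
  constructor
  · rintro hf _ x ⟨⟨_, n, rfl⟩, rfl⟩
    have hn : DomMulAct.mk g ^ n ∈ stabilizer Gᵈᵐᵃ f := zpow_mem (mem_stabilizer_iff.2 hf) n
    exact congrFun hn x
  · intro h
    ext x
    exact h (mem_orbit x (⟨g, Subgroup.mem_zpowers g⟩ : Subgroup.zpowers g))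

theorem card_fixedBy_mk [Finite X] (C : Type*) (g : G) :
    Nat.card (fixedBy (X → C) (DomMulAct.mk g)) =
      Nat.card C ^ Nat.card (orbitRel.Quotient (Subgroup.zpowers g) X) := by
  have : Finite (orbitRel.Quotient (Subgroup.zpowers g) X) := Quotient.finite _
  rw [← Nat.card_fun]
  exact Nat.card_congr ((Equiv.subtypeEquivRight fun _ => mem_fixedBy_mk_iff_le_ker).trans
    (Setoid.liftEquiv _))

theorem sum_natCard_fixedBy [Fintype G] [Finite X] :
    ∑ g : G, Nat.card (fixedBy X g) = Nat.card (orbitRel.Quotient G X) * Nat.card G := by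
  classical
  have : Fintype X := Fintype.ofFinite X
  have : Fintype (orbitRel.Quotient G X) := Fintype.ofFinite _
  simp only [Nat.card_eq_fintype_card]
  exact sum_card_fixedBy_eq_card_orbits_mul_card_group G X

theorem card_orbits_arrow_mul_card [Fintype G] [Finite X] (C : Type*) [Finite C] :
    Nat.card (orbitRel.Quotient Gᵈᵐᵃ (X → C)) * Nat.card G =
      ∑ g : G, Nat.card C ^ Nat.card (orbitRel.Quotient (Subgroup.zpowers g) X) := by
  have : Fintype Gᵈᵐᵃ := Fintype.ofEquiv G DomMulAct.mk
  rw [Nat.card_congr (DomMulAct.mk (M := G)), ← sum_natCard_fixedBy,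
    ← DomMulAct.mk.sum_comp]
  simp only [card_fixedBy_mk]

theorem card_orbits_mul_card_of_free (h : ∀ x : X, stabilizer G x = ⊥) :
    Nat.card (orbitRel.Quotient G X) * Nat.card G = Nat.card X := by
  rw [← Nat.card_prod]
  exact Nat.card_congr (selfEquivOrbitsQuotientProd h).symm

theorem sum_natCard_fixedBy_pow [Finite X] {g : G} (hg : IsOfFinOrder g) :
    ∑ i : Fin (orderOf g), Nat.card (fixedBy X (g ^ (i : ℕ))) =
      Nat.card (orbitRel.Quotient (Subgroup.zpowers g) X) * orderOf g := by
  have : Fintype (Subgroup.zpowers g) := Fintype.ofEquiv _ (finEquivZPowers hg)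
  have h := sum_natCard_fixedBy (G := Subgroup.zpowers g) (X := X)
  rwa [Nat.card_zpowers, ← (finEquivZPowers hg).sum_comp] at h

theorem card_orbits_zpowers_mul_two [Finite X] {g : G} (hg : orderOf g = 2) :
    Nat.card (orbitRel.Quotient (Subgroup.zpowers g) X) * 2 =
      Nat.card X + Nat.card (fixedBy X g) := by
  have h := sum_natCard_fixedBy_pow (X := X) (orderOf_pos_iff.1 (hg ▸ two_pos))
  rw [hg, Fin.sum_univ_two] at h
  simpa using h.symm

end Polya

section Cyclic

theorem sum_addOrderOf {A M : Type*} [AddGroup A] [IsAddCyclic A] [Fintype A] [AddCommMonoid M]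
    (f : ℕ → M) : ∑ a : A, f (addOrderOf a) = ∑ d ∈ (Nat.card A).divisors, d.totient • f d := by
  classical
  have hdvd (a : A) : addOrderOf a ∈ (Nat.card A).divisors :=
    Nat.mem_divisors.2 ⟨addOrderOf_dvd_natCard a, Nat.card_pos.ne'⟩
  rw [← Finset.sum_fiberwise_of_maps_to fun a _ => hdvd a]
  refine Finset.sum_congr rfl fun d hd => ?_
  have hcard : d ∣ Fintype.card A :=
    Nat.card_eq_fintype_card (α := A) ▸ Nat.dvd_of_mem_divisors hd
  rw [← IsAddCyclic.card_addOrderOf_eq_totient hcard, ← Finset.sum_const]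
  exact Finset.sum_congr rfl fun a ha => by rw [(Finset.mem_filter.1 ha).2]

theorem natCard_nsmul_eq {A : Type*} [AddCommGroup A] [IsAddCyclic A] [Finite A] (d : ℕ) (a : A)
    [Decidable (a ∈ (nsmulAddMonoidHom (α := A) d).range)] :
    Nat.card {x : A // d • x = a} =
      if a ∈ (nsmulAddMonoidHom d).range then (Nat.card A).gcd d else 0 := by
  split_ifs with ha
  · obtain ⟨b, rfl⟩ := ha
    rw [← IsAddCyclic.card_nsmulAddMonoidHom_ker A d]
    exact Nat.card_congr ((nsmulAddMonoidHom d).fiberEquivKer b)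
  · have : IsEmpty {x : A // d • x = a} := ⟨fun x => ha ⟨x, x.2⟩⟩
    exact Nat.card_of_isEmpty

theorem sum_natCard_nsmul_eq {A M : Type*} [AddCommGroup A] [IsAddCyclic A] [Fintype A]
    [AddCommMonoid M] (d : ℕ) (f : ℕ → M) :
    ∑ a : A, f (Nat.card {x : A // d • x = a}) =
      (Nat.card A / (Nat.card A).gcd d) • f ((Nat.card A).gcd d) +
        (Nat.card A - Nat.card A / (Nat.card A).gcd d) • f 0 := by
  classical
  have hrange : Finset.card {a : A | a ∈ (nsmulAddMonoidHom (α := A) d).range} =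
      Nat.card A / (Nat.card A).gcd d := by
    rw [← IsAddCyclic.card_nsmulAddMonoidHom_range A d, Nat.card_eq_fintype_card,
      Fintype.card_subtype]
  simp only [natCard_nsmul_eq, apply_ite f]
  rw [Finset.sum_ite, Finset.sum_const, Finset.sum_const, hrange, Finset.filter_not,
    Finset.card_sdiff_of_subset (Finset.filter_subset _ _), hrange, Finset.card_univ,
    Nat.card_eq_fintype_card]

end Cyclic

section Dihedral

open MulAction DihedralGroup

variable {n : ℕ}

/-- The action of the dihedral group on the vertices `ZMod n` of the regular `n`-gon. The formula
for `sr i` is forced by `sr i = sr 0 * r i`, with `sr 0` acting as negation. -/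
instance : MulAction (DihedralGroup n) (ZMod n) where
  smul
    | r i, x => x + i
    | sr i, x => -(x + i)
  one_smul := add_zero
  mul_smul := by
    rintro (i | i) (j | j) x
    · change x + (i + j) = x + j + i
      ring
    · change -(x + (j - i)) = -(x + j) + i
      ring
    · change -(x + (i + j)) = -(x + j + i)
      ring
    · change x + (j - i) = -(-(x + j) + i)
      ring

theorem dihedral_r_smul (i x : ZMod n) : r i • x = x + i :=
  rfl

theorem dihedral_sr_smul (i x : ZMod n) : sr i • x = -(x + i) :=
  rfl

theorem closure_dihedral_r_one_sr_zero :
    Subgroup.closure {r 1, sr 0} = (⊤ : Subgroup (DihedralGroup n)) := by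
  have hr (i : ZMod n) : r i ∈ Subgroup.closure {r 1, sr (0 : ZMod n)} := by
    rw [← ZMod.intCast_zmod_cast i, ← r_one_zpow]
    exact zpow_mem (Subgroup.subset_closure (Set.mem_insert _ _)) _
  rw [Subgroup.eq_top_iff']
  rintro (i | i)
  · exact hr i
  · rw [← zero_add i, ← sr_mul_r]
    exact mul_mem (Subgroup.subset_closure (Set.mem_insert_of_mem _ rfl)) (hr i)

theorem range_toPermHom_dihedralGroup :
    (toPermHom (DihedralGroup n) (ZMod n)).range =
      Subgroup.closure {Equiv.addRight 1, Equiv.neg (ZMod n)} := by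
  have hneg : toPermHom (DihedralGroup n) (ZMod n) (sr 0) = Equiv.neg (ZMod n) := by
    ext x
    exact congrArg Neg.neg (add_zero x)
  rw [MonoidHom.range_eq_map, ← closure_dihedral_r_one_sr_zero, MonoidHom.map_closure,
    Set.image_pair, hneg]
  rfl

theorem stabilizer_zpowers_r (i x : ZMod n) : stabilizer (Subgroup.zpowers (r i)) x = ⊥ := by
  rw [Subgroup.eq_bot_iff_forall]
  rintro ⟨_, k, rfl⟩ hk
  have hik : x + i * k = x := by
    rw [← dihedral_r_smul, ← r_zpow]
    exact hk
  ext1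
  simp only [r_zpow, add_eq_left.1 hik, r_zero, Subgroup.coe_one]

theorem card_orbits_zpowers_r [NeZero n] (i : ZMod n) :
    Nat.card (orbitRel.Quotient (Subgroup.zpowers (r i)) (ZMod n)) = n / addOrderOf i := by
  have horder : orderOf (r i) = addOrderOf i := by
    conv_rhs => rw [← ZMod.natCast_zmod_val i]
    rw [orderOf_r, ZMod.addOrderOf_coe _ (NeZero.ne n)]
  have h := card_orbits_mul_card_of_free (stabilizer_zpowers_r i)
  rw [Nat.card_zpowers, horder, Nat.card_zmod] at h
  exact Nat.eq_div_of_mul_eq_left (addOrderOf_pos i).ne' h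

theorem card_fixedBy_sr (i : ZMod n) :
    Nat.card (fixedBy (ZMod n) (sr i)) = Nat.card {x : ZMod n // 2 • x = -i} := by
  refine Nat.card_congr (Equiv.subtypeEquivRight fun x => ?_)
  rw [mem_fixedBy, dihedral_sr_smul, two_nsmul, neg_eq_iff_add_eq_zero, eq_neg_iff_add_eq_zero]
  abel_nf

theorem card_orbits_zpowers_sr [NeZero n] (i : ZMod n) :
    Nat.card (orbitRel.Quotient (Subgroup.zpowers (sr i)) (ZMod n)) =
      (n + Nat.card {x : ZMod n // 2 • x = -i}) / 2 := by
  have h := card_orbits_zpowers_mul_two (X := ZMod n) (orderOf_sr i)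
  rw [card_fixedBy_sr, Nat.card_zmod] at h
  rw [← h, Nat.mul_div_cancel _ two_pos]

/-- The bracelets with `n` beads coloured by `C`, i.e. the cyclic words of length `n` in `C` up to
rotation and reversal. -/
abbrev Bracelet (n : ℕ) (C : Type*) : Type _ :=
  orbitRel.Quotient (DihedralGroup n)ᵈᵐᵃ (ZMod n → C)

variable (n) [NeZero n] (C : Type*) [Finite C]

theorem card_bracelet_mul_two_mul :
    Nat.card (Bracelet n C) * (2 * n) =
      ∑ d ∈ n.divisors, d.totient * Nat.card C ^ (n / d) +
        (n / n.gcd 2 * Nat.card C ^ ((n + n.gcd 2) / 2) +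
          (n - n / n.gcd 2) * Nat.card C ^ (n / 2)) := by
  have hrot := sum_addOrderOf (A := ZMod n) fun d => Nat.card C ^ (n / d)
  have hrefl := sum_natCard_nsmul_eq (A := ZMod n) 2 fun t => Nat.card C ^ ((n + t) / 2)
  rw [Nat.card_zmod] at hrot
  rw [Nat.card_zmod, ← Equiv.sum_comp (Equiv.neg (ZMod n))] at hrefl
  rw [← nat_card (n := n), card_orbits_arrow_mul_card, ← equivSum.symm.sum_comp,
    Fintype.sum_sum_type]
  exact congrArg₂ (· + ·)
    ((Finset.sum_congr rfl fun i _ => congrArg _ (card_orbits_zpowers_r i)).trans hrot)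
    ((Finset.sum_congr rfl fun i _ => congrArg _ (card_orbits_zpowers_sr i)).trans hrefl)

variable {n}

theorem card_bracelet_of_even (hn : Even n) :
    (Nat.card (Bracelet n C) : ℚ) =
      1 / (2 * n) * ∑ d ∈ n.divisors, (d.totient : ℚ) * Nat.card C ^ (n / d) +
        (Nat.card C + 1) * Nat.card C ^ (n / 2) / 4 := by
  obtain ⟨m, rfl⟩ := hn.two_dvd
  have hm : (m : ℚ) ≠ 0 := Nat.cast_ne_zero.2 (right_ne_zero_of_mul (NeZero.ne (2 * m)))
  have h := card_bracelet_mul_two_mul (2 * m) C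
  have hsub : 2 * m - m = m := by omega
  have hadd : (2 * m + 2) / 2 = m + 1 := by omega
  rw [Nat.gcd_mul_right_left, Nat.mul_div_cancel_left m two_pos, hsub, hadd, pow_succ] at h
  rw [Nat.mul_div_cancel_left m two_pos]
  have hq := congrArg (Nat.cast : ℕ → ℚ) h
  push_cast at hq ⊢
  field_simp
  linear_combination 4 * hq

theorem card_bracelet_of_odd (hn : Odd n) :
    (Nat.card (Bracelet n C) : ℚ) =
      1 / (2 * n) * ∑ d ∈ n.divisors, (d.totient : ℚ) * Nat.card C ^ (n / d) +
        Nat.card C ^ ((n + 1) / 2) / 2 := by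
  have hn0 : (n : ℚ) ≠ 0 := Nat.cast_ne_zero.2 (NeZero.ne n)
  have h := card_bracelet_mul_two_mul n C
  rw [hn.coprime_two_right, Nat.div_one, Nat.sub_self, zero_mul, add_zero] at h
  have hq := congrArg (Nat.cast : ℕ → ℚ) h
  push_cast at hq
  field_simp
  linear_combination hq

theorem finrank_add_one_eq_card_bracelet
    (V : Submodule ℝ (Matrix (ZMod n → Fin 2) (ZMod n → Fin 2) ℂ))
    (hV : ∀ a, a ∈ V ↔ aᴴ = -a ∧ a.trace = 0 ∧
      ∀ α ∈ Subgroup.closure {Equiv.addRight 1, Equiv.neg (ZMod n)},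
        qubitPermMatrix α * a * (qubitPermMatrix α)⁻¹ = a) :
    Module.finrank ℝ V + 1 = Nat.card (Bracelet n (Fin 2 × Fin 2)) := by
  have hVsu : V = invariantSu (DihedralGroup n)ᵈᵐᵃ (ZMod n → Fin 2) := by
    ext a
    rw [hV, mem_invariantSu_domMulAct, range_toPermHom_dihedralGroup]
  rw [hVsu, finrank_invariantSu_add_one, card_orbits_arrow_prod]

end Dihedral

/-- For `N ≥ 3`, let `D_N` be the dihedral subgroup of `Equiv.Perm (Fin N)`
generated by the `N`-cycle `i ↦ i + 1 (mod N)` (i.e. `finRotate N`) and the reflection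
`i ↦ −i (mod N)`.  The real dimension of `D_N su(2^N)` equals
`(1/(2N)) Σ_{d ∣ N} φ(d) 4^{N/d} + 5·4^{(N−2)/2} − 1` if `N` is even, and
`(1/(2N)) Σ_{d ∣ N} φ(d) 4^{N/d} + 2·4^{(N−1)/2} − 1` if `N` is odd. -/
theorem finrank_DNsu (N : ℕ) [NeZero N] (hN : 3 ≤ N)
    (V : Submodule ℝ (Matrix (Fin N → Fin 2) (Fin N → Fin 2) ℂ))
    (hV : ∀ a, a ∈ V ↔ aᴴ = -a ∧ a.trace = 0 ∧
      ∀ α ∈ Subgroup.closure {finRotate N, Equiv.neg (Fin N)},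
        qubitPermMatrix α * a * (qubitPermMatrix α)⁻¹ = a) :
    (Even N →
      (Module.finrank ℝ V : ℚ) =
        (1 / (2 * N)) * ∑ d ∈ N.divisors, (Nat.totient d : ℚ) * 4 ^ (N / d)
          + 5 * 4 ^ ((N - 2) / 2) - 1) ∧
    (¬ Even N →
      (Module.finrank ℝ V : ℚ) =
        (1 / (2 * N)) * ∑ d ∈ N.divisors, (Nat.totient d : ℚ) * 4 ^ (N / d)
          + 2 * 4 ^ ((N - 1) / 2) - 1) := by
  have hdim : Module.finrank ℝ V + 1 = Nat.card (Bracelet N (Fin 2 × Fin 2)) := by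
    -- `ZMod N` unfolds to `Fin N` only once `N` is a successor.
    obtain ⟨n, rfl⟩ := Nat.exists_eq_succ_of_ne_zero (NeZero.ne N)
    have hrot : finRotate (n + 1) = Equiv.addRight 1 := Equiv.ext finRotate_apply
    rw [hrot] at hV
    exact finrank_add_one_eq_card_bracelet (n := n + 1) V hV
  have hdimQ : (Module.finrank ℝ V : ℚ) = Nat.card (Bracelet N (Fin 2 × Fin 2)) - 1 := by
    rw [← hdim, Nat.cast_succ, add_sub_cancel_right]
  have hcard : (Nat.card (Fin 2 × Fin 2) : ℚ) = 4 := by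
    simp
  refine ⟨fun heven => ?_, fun hodd => ?_⟩
  · have hhalf : N / 2 = (N - 2) / 2 + 1 := by omega
    rw [hdimQ, card_bracelet_of_even _ heven, hcard, hhalf]
    ring
  · rw [Nat.not_even_iff_odd] at hodd
    have hhalf : (N + 1) / 2 = (N - 1) / 2 + 1 := by omega
    rw [hdimQ, card_bracelet_of_odd _ hodd, hcard, hhalf]
    ring
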